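/- Let J be a connected graph with at least 4 vertices and let X ⊆ V(J) with |X| ≤ 2.ct Suppose there do not exist independent (≤2)-separations (A,B) and (C,D) of J with |V(A)| ≤ 3, |V(C)| ≤ 3, and X ⊆ V(B) ∩ V(D). Let S := {s ∈ V(J) \ X : deg_J(s) ≤ 2}. Then |S| ≤ 2, and if |S| = 2 then the two vertices of S are adjacent in J. -/

import Mathlib

/-!
A vertex `x` of degree `k` with a non-neighbor is split off by the `k`-separation consisting of the
star at `x` and of `J - x`. For distinct non-adjacent `x` and `y` these separations are independent,
so under the hypothesis on `J` the vertices of degree at most 2 outside `X` form a clique. If a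
clique of vertices of degree at most `d` had more than `d` elements, it would be the closed
neighborhood of each of its elements; having no edge to its complement, it would then be the whole
vertex set, of size at most `d + 1`.
-/

open SimpleGraph

/-- `(A, B)` is a `k`-separation of `H`: edge-disjoint subgraphs whose union is `H`,
with `V(A) \ V(B)` and `V(B) \ V(A)` nonempty and `|V(A) ∩ V(B)| = k`. -/
def IsSeparation {V : Type*} (H : SimpleGraph V) (A B : H.Subgraph) (k : ℕ) : Prop :=
  Disjoint A.edgeSet B.edgeSet ∧ A ⊔ B = ⊤ ∧
    (A.verts \ B.verts).Nonempty ∧ (B.verts \ A.verts).Nonempty ∧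
    (A.verts ∩ B.verts).ncard = k

/-- `(A, B)` is a `(≤2)`-separation of `H`. -/
def IsSepLE2 {V : Type*} (H : SimpleGraph V) (A B : H.Subgraph) : Prop :=
  ∃ k ≤ 2, IsSeparation H A B k

/-- The edge set of `A⁻`: the edges of `A` except those joining two vertices
of `V(A) ∩ V(B)`. -/
def sepMinusEdges {V : Type*} {H : SimpleGraph V} (A B : H.Subgraph) : Set (Sym2 V) :=
  {e | e ∈ A.edgeSet ∧ ¬ ∀ v ∈ e, v ∈ A.verts ∩ B.verts}

/-- Separations `(A,B)` and `(C,D)` are independent. -/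
def IndepSeps {V : Type*} {H : SimpleGraph V} (A B C D : H.Subgraph) : Prop :=
  sepMinusEdges A B ∩ sepMinusEdges C D = ∅ ∧
    (A.verts \ B.verts) ∩ (C.verts \ D.verts) = ∅

/-- `β(T)`: the maximum size of a stable set in the subgraph of `T` induced by the
vertices of degree at most 2. -/
noncomputable def beta {V : Type*} (T : SimpleGraph V) : ℕ :=
  sSup {n | ∃ S : Set V, S.ncard = n ∧ (∀ v ∈ S, (T.neighborSet v).ncard ≤ 2) ∧
    (∀ u ∈ S, ∀ w ∈ S, ¬ T.Adj u w)}

lemma encard_le_ofNat_iff_ncard_le {V : Type*} [Finite V] (s : Set V) (n : ℕ) [n.AtLeastTwo] :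
    s.encard ≤ ofNat(n) ↔ s.ncard ≤ ofNat(n) :=
  Set.encard_le_coe_iff_finite_ncard_le.trans (and_iff_right s.toFinite)

section Star

variable {V : Type*} {J : SimpleGraph V} {x y : V}

/-- The star at `x` in `J`, the small side of the separation splitting off `x`: all edges of `J` at
`x`, with their ends. Edges between two neighbors of `x` are left out, so that the star is
edge-disjoint from `J - x`. -/
@[simps]
def starSubgraph (J : SimpleGraph V) (x : V) : J.Subgraph where
  verts := insert x (J.neighborSet x)
  Adj u v := J.Adj u v ∧ (u = x ∨ v = x)
  adj_sub h := h.1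
  edge_vert := by
    rintro u v ⟨h, rfl | rfl⟩
    · exact Set.mem_insert _ _
    · exact Set.mem_insert_of_mem _ h.symm
  symm := ⟨fun _ _ h => ⟨h.1.symm, h.2.symm⟩⟩

lemma disjoint_edgeSet_starSubgraph_deleteVerts :
    Disjoint (starSubgraph J x).edgeSet ((⊤ : J.Subgraph).deleteVerts {x}).edgeSet := by
  rw [Set.disjoint_left, Sym2.forall]
  rintro u v ⟨-, hx⟩ hdel
  rw [Subgraph.mem_edgeSet, Subgraph.deleteVerts_adj] at hdel
  exact hx.elim hdel.2.1 hdel.2.2.2.1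

lemma starSubgraph_sup_deleteVerts :
    starSubgraph J x ⊔ (⊤ : J.Subgraph).deleteVerts {x} = ⊤ := by
  ext u v
  · by_cases h : u = x <;> simp [h]
  · simp only [Subgraph.sup_adj, starSubgraph_adj, Subgraph.deleteVerts_adj, Subgraph.verts_top,
      Set.mem_univ, Set.mem_singleton_iff, Subgraph.top_adj]
    tauto

lemma starSubgraph_verts_inter_deleteVerts_verts :
    (starSubgraph J x).verts ∩ ((⊤ : J.Subgraph).deleteVerts {x}).verts = J.neighborSet x := by
  have hx : x ∉ J.neighborSet x := J.irrefl
  rw [starSubgraph_verts, Subgraph.deleteVerts_verts, Subgraph.verts_top, ← Set.compl_eq_univ_sdiff,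
    ← Set.sdiff_eq, Set.insert_sdiff_self_of_notMem hx]

lemma isSeparation_starSubgraph_deleteVerts (hxy : x ≠ y) (hadj : ¬ J.Adj x y) :
    IsSeparation J (starSubgraph J x) ((⊤ : J.Subgraph).deleteVerts {x})
      (J.neighborSet x).ncard := by
  refine ⟨disjoint_edgeSet_starSubgraph_deleteVerts, starSubgraph_sup_deleteVerts,
    ⟨x, by simp⟩, ⟨y, by simp [hxy.symm, hadj]⟩, ?_⟩
  rw [starSubgraph_verts_inter_deleteVerts_verts]

lemma indepSeps_starSubgraph_deleteVerts (hxy : x ≠ y) (hadj : ¬ J.Adj x y) :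
    IndepSeps (starSubgraph J x) ((⊤ : J.Subgraph).deleteVerts {x})
      (starSubgraph J y) ((⊤ : J.Subgraph).deleteVerts {y}) := by
  refine ⟨Set.eq_empty_of_forall_notMem (Sym2.forall.2 ?_), Set.eq_empty_of_forall_notMem ?_⟩
  · rintro u v ⟨⟨⟨huv, hx⟩, -⟩, ⟨-, hy⟩, -⟩
    rcases hx with rfl | rfl <;> rcases hy with rfl | rfl
    exacts [hxy rfl, hadj huv, hadj huv.symm, hxy rfl]
  · rintro v ⟨⟨-, hx⟩, -, hy⟩
    have hvx : v = x := by simpa using hx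
    have hvy : v = y := by simpa using hy
    exact hxy (hvx.symm.trans hvy)

end Star

section Clique

variable {V : Type*} {G : SimpleGraph V} {S : Set V} {d : ℕ}

lemma eq_insert_neighborSet_of_isClique (hS : G.IsClique S) {v : V} (hv : v ∈ S)
    (hdeg : (G.neighborSet v).encard ≤ d) (hcard : d < S.encard) :
    S = insert v (G.neighborSet v) := by
  have hfin : (insert v (G.neighborSet v)).Finite := (Set.finite_of_encard_le_coe hdeg).insert v
  refine hfin.eq_of_subset_of_encard_le' (fun u hu => ?_) ?_
  · exact or_iff_not_imp_left.2 fun huv => hS hv hu (Ne.symm huv)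
  · calc (insert v (G.neighborSet v)).encard
      _ ≤ (G.neighborSet v).encard + 1 := Set.encard_insert_le _ _
      _ ≤ d + 1 := by gcongr
      _ ≤ S.encard := Order.add_one_le_of_lt hcard

lemma eq_univ_of_forall_neighborSet_subset (hG : G.Preconnected) (hne : S.Nonempty)
    (hS : ∀ v ∈ S, G.neighborSet v ⊆ S) : S = Set.univ := by
  refine Set.eq_univ_of_forall fun v => ?_
  by_contra hv
  obtain ⟨u, hu⟩ := hne
  obtain ⟨p⟩ := hG u v
  obtain ⟨e, -, hfst, hsnd⟩ := p.exists_boundary_dart S hu hv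
  exact hsnd (hS e.fst hfst e.adj)

lemma encard_le_of_isClique_of_encard_neighborSet_le (hG : G.Preconnected)
    (hcard : d + 1 < ENat.card V) (hS : G.IsClique S)
    (hdeg : ∀ v ∈ S, (G.neighborSet v).encard ≤ d) : S.encard ≤ d := by
  by_contra! hlt
  have hclosed : ∀ v ∈ S, S = insert v (G.neighborSet v) := fun v hv =>
    eq_insert_neighborSet_of_isClique hS hv (hdeg v hv) hlt
  obtain ⟨v, hv⟩ : S.Nonempty := Set.encard_pos.1 (bot_le.trans_lt hlt)
  have huniv : S = Set.univ := eq_univ_of_forall_neighborSet_subset hG ⟨v, hv⟩ fun u hu =>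
    (Set.subset_insert _ _).trans (hclosed u hu).ge
  refine hcard.not_ge ?_
  calc ENat.card V
    _ = (insert v (G.neighborSet v)).encard := by rw [← hclosed v hv, huniv, Set.encard_univ]
    _ ≤ (G.neighborSet v).encard + 1 := Set.encard_insert_le _ _
    _ ≤ d + 1 := by grw [hdeg v hv]

end Clique

lemma isClique_of_not_exists_indepSeps {V : Type*} {J : SimpleGraph V} {X : Set V}
    (hnoflaps : ¬ ∃ A B C D : J.Subgraph, IsSepLE2 J A B ∧ IsSepLE2 J C D ∧
      A.verts.encard ≤ 3 ∧ C.verts.encard ≤ 3 ∧ IndepSeps A B C D ∧ X ⊆ B.verts ∩ D.verts) :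
    J.IsClique {s : V | s ∉ X ∧ (J.neighborSet s).encard ≤ 2} := by
  rintro x ⟨hxX, hx⟩ y ⟨hyX, hy⟩ hxy
  by_contra hadj
  have hsmall {z : V} (hz : (J.neighborSet z).encard ≤ 2) : (starSubgraph J z).verts.encard ≤ 3 :=
    calc (starSubgraph J z).verts.encard
      _ ≤ (J.neighborSet z).encard + 1 := Set.encard_insert_le _ _
      _ ≤ 2 + 1 := by gcongr
      _ = 3 := by norm_num
  have hsep {z w : V} (hz : (J.neighborSet z).encard ≤ 2) (hzw : z ≠ w) (hnadj : ¬ J.Adj z w) :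
      IsSepLE2 J (starSubgraph J z) ((⊤ : J.Subgraph).deleteVerts {z}) :=
    ⟨_, ENat.toNat_le_of_le_natCast hz, isSeparation_starSubgraph_deleteVerts hzw hnadj⟩
  have hX {z : V} (hz : z ∉ X) : X ⊆ ((⊤ : J.Subgraph).deleteVerts {z}).verts :=
    Set.subset_sdiff_singleton X.subset_univ hz
  exact hnoflaps ⟨_, _, _, _, hsep hx hxy hadj, hsep hy hxy.symm fun h => hadj h.symm,
    hsmall hx, hsmall hy, indepSeps_starSubgraph_deleteVerts hxy hadj,
    Set.subset_inter (hX hxX) (hX hyX)⟩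

/-- Sizes are measured by `Set.encard`, because `Set.ncard` is `0` on infinite sets. The `ncard` in
`IsSepLE2` is harmless: the separators lie in the finite sets `V(A)` and `V(C)`. -/
theorem stmt4_general {V : Type*} (J : SimpleGraph V) (hconn : J.Preconnected)
    (hcard : 4 ≤ ENat.card V) (X : Set V)
    (hnoflaps : ¬ ∃ A B C D : J.Subgraph, IsSepLE2 J A B ∧ IsSepLE2 J C D ∧
      A.verts.encard ≤ 3 ∧ C.verts.encard ≤ 3 ∧ IndepSeps A B C D ∧ X ⊆ B.verts ∩ D.verts) :
    {s : V | s ∉ X ∧ (J.neighborSet s).encard ≤ 2}.encard ≤ 2 ∧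
    (∀ x ∈ {s : V | s ∉ X ∧ (J.neighborSet s).encard ≤ 2},
      ∀ y ∈ {s : V | s ∉ X ∧ (J.neighborSet s).encard ≤ 2}, x ≠ y → J.Adj x y) := by
  have hclique := isClique_of_not_exists_indepSeps hnoflaps
  have hthree : (2 : ℕ) + 1 < ENat.card V := lt_of_lt_of_le (by norm_num) hcard
  exact ⟨encard_le_of_isClique_of_encard_neighborSet_le hconn hthree hclique fun _ hs => hs.2,
    fun _ hx _ hy => hclique hx hy⟩

/-- Let `J` be a connected graph with at least 4 vertices and `X` a set of at most 2 vertices.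
If there are no independent `(≤2)`-separations `(A,B)`, `(C,D)` of `J` with `|V(A)| ≤ 3`,
`|V(C)| ≤ 3` and `X ⊆ V(B) ∩ V(D)`, then the set `S` of vertices outside `X` of degree at
most 2 has size at most 2, and if it has two elements they are adjacent. -/
theorem stmt4 {V : Type*} [Fintype V] (J : SimpleGraph V) (hconn : J.Connected)
    (hcard : 4 ≤ Fintype.card V) (X : Set V) (hX : X.ncard ≤ 2)
    (hnoflaps : ¬ ∃ A B C D : J.Subgraph, IsSepLE2 J A B ∧ IsSepLE2 J C D ∧
      A.verts.ncard ≤ 3 ∧ C.verts.ncard ≤ 3 ∧ IndepSeps A B C D ∧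
      X ⊆ B.verts ∩ D.verts) :
    {s : V | s ∉ X ∧ (J.neighborSet s).ncard ≤ 2}.ncard ≤ 2 ∧
    (∀ x ∈ {s : V | s ∉ X ∧ (J.neighborSet s).ncard ≤ 2},
      ∀ y ∈ {s : V | s ∉ X ∧ (J.neighborSet s).ncard ≤ 2}, x ≠ y → J.Adj x y) := by
  simpa only [encard_le_ofNat_iff_ncard_le] using stmt4_general J hconn.preconnected
    (by simpa using hcard) X (by simpa only [encard_le_ofNat_iff_ncard_le] using hnoflaps)
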